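/- arXiv:1610.01916 — 2 statements merged into one kernel-verified Lean document; each statement's English description precedes it below -/
import Mathlib

section
/- Watson's lemma for asymptotics with respect to a germ (Lemma 7.19): Let d ≥ 1, s > 0, P holomorphic on D(0;R) with P(0) = 0 and P not identically zero, and Π = Π_P(θ_1,θ_2;R) a P-sector with θ_2 − θ_1 > sπ. If f : Π → ℂ is holomorphic and there exist constants K, A > 0 such that |f(x)| ≤ K·A^N·Γ(sN+1)·|P(x)|^N for every N ∈ ℕ and every x ∈ Π (i.e., f has the zero series as P-s-Gevrey asymptotic expansion), then there exists ρ > 0 such that f vanishes identically on Π ∩ D(0;ρ). -/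
open Set Complex

noncomputable section

/-- Open polydisk of radius `r` centered at `0` in `ℂ^d`. -/
def polydisk (d : ℕ) (r : ℝ) : Set (Fin d → ℂ) :=
  {x | ∀ j, ‖x j‖ < r}

/-- The `P`-sector `Π_P(a,b;r)`. -/
def PSector (d : ℕ) (P : (Fin d → ℂ) → ℂ) (a b r : ℝ) : Set (Fin d → ℂ) :=
  {x | (∀ j, 0 < ‖x j‖ ∧ ‖x j‖ < r) ∧ P x ≠ 0 ∧
    ∃ θ ∈ Set.Ioo a b, P x = (‖P x‖ : ℂ) * Complex.exp (θ * Complex.I)}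

lemma gevrey (s κ K A : ℝ) (hs : 0 < s) (hκ : 0 < κ) (hsk : s * κ < 1) (hK : 0 < K) (hA : 0 < A)
    (l : ℝ) (hl : 0 ≤ l) : ∃ M, ∀ y ρ : ℝ, 0 ≤ y → 0 < ρ → ρ ≤ 1 →
      (∀ N : ℕ, y ≤ K * A ^ N * Real.Gamma (s * N + 1) * ρ ^ N) →
      y * Real.exp (l * ρ ^ (-κ)) ≤ M := by
  set a := s * κ with ha
  have ha0 : 0 < a := by positivity
  have ha1 : 0 < 1 - a := by linarith
  obtain ⟨G, hG⟩ : ∃ G, ∀ c ∈ Icc (1:ℝ) ((s + 1 - a) / (1 - a)), ‖Real.Gamma c‖ ≤ G := by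
    apply isCompact_Icc.exists_bound_of_continuousOn
    intro c hc
    apply ContinuousAt.continuousWithinAt
    apply DifferentiableAt.continuousAt (𝕜 := ℝ)
    apply Real.differentiableAt_Gamma
    intro m hm
    have := hc.1
    have : (0:ℝ) ≤ m := by positivity
    linarith
  set A' := max A 1
  have hA1 : 1 ≤ A' := le_max_right _ _
  have hA0 : 0 < A' := by linarith
  set X := 2 * l * A' ^ κ with hX
  have hX0 : 0 ≤ X := by positivity
  set E := Real.exp (X ^ (1 / (1 - a))) ^ (1 - a) with hE
  set G' := max G 1
  have hG0 : 1 ≤ G' := le_max_right _ _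
  have hXE : ∀ n : ℕ, X ^ n ≤ E * (n.factorial : ℝ) ^ (1 - a) := by
    intro n
    have h := Real.pow_div_factorial_le_exp (X ^ (1 / (1 - a))) (by positivity) n
    rw [div_le_iff₀ (by positivity)] at h
    have h2 := Real.rpow_le_rpow (by positivity) h ha1.le
    rw [Real.mul_rpow (Real.exp_pos _).le (by positivity)] at h2
    convert h2 using 1
    rw [← Real.rpow_natCast, ← Real.rpow_natCast, ← Real.rpow_mul hX0, ← Real.rpow_mul hX0]
    congr 1
    field_simp
  have hGam : ∀ n : ℕ, Real.Gamma (s * (⌈κ * n⌉₊ : ℕ) + 1) ≤ (n.factorial : ℝ) ^ a * G' ^ (1 - a) := by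
    intro n
    set N := ⌈κ * n⌉₊
    have h1 : κ * n ≤ N := Nat.le_ceil _
    have h2 : (N:ℝ) < κ * n + 1 := Nat.ceil_lt_add_one (by positivity)
    have h1' : a * n ≤ s * N := by rw [ha]; nlinarith
    have h2' : s * N ≤ a * n + s := by rw [ha]; nlinarith
    set c := (s * N + 1 - a * n - a) / (1 - a) with hc
    have hc1 : 1 ≤ c := by rw [hc, le_div_iff₀ ha1]; linarith
    have hc2 : c ≤ (s + 1 - a) / (1 - a) := by rw [hc]; gcongr; linarith
    have h3 := Real.Gamma_mul_add_mul_le_rpow_Gamma_mul_rpow_Gamma (s := n + 1) (t := c)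
      (by positivity) (by linarith) ha0 ha1 (by ring)
    have h4 : a * ((n:ℝ) + 1) + (1 - a) * c = s * N + 1 := by
      rw [hc]; field_simp; ring
    rw [h4, Real.Gamma_nat_eq_factorial] at h3
    refine h3.trans ?_
    have hc0 : 0 ≤ Real.Gamma c := (Real.Gamma_pos_of_pos (by linarith)).le
    gcongr
    · exact (le_abs_self _).trans ((hG c ⟨hc1, hc2⟩).trans (le_max_left _ _))
  refine ⟨K * A' * G' ^ (1 - a) * E * 2, ?_⟩
  intro y ρ hy hρ hρ1 h
  have key : ∀ n : ℕ, y * ((l * ρ ^ (-κ)) ^ n / n.factorial) ≤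
      K * A' * G' ^ (1 - a) * E * (1 / 2) ^ n := by
    intro n
    set N := ⌈κ * n⌉₊
    have h1 : κ * n ≤ N := Nat.le_ceil _
    have h2 : (N:ℝ) < κ * n + 1 := Nat.ceil_lt_add_one (by positivity)
    have e1 : A ^ N ≤ A' * (A' ^ κ) ^ n := by
      calc A ^ N ≤ A' ^ N := by gcongr; exact le_max_left _ _
        _ = A' ^ (N:ℝ) := (Real.rpow_natCast _ _).symm
        _ ≤ A' ^ (1 + κ * n) := Real.rpow_le_rpow_of_exponent_le hA1 (by linarith)
        _ = _ := by rw [Real.rpow_add hA0, Real.rpow_one, Real.rpow_mul hA0.le, Real.rpow_natCast]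
    have e2 : ρ ^ N * (ρ ^ (-κ)) ^ n ≤ 1 := by
      rw [← Real.rpow_natCast, ← Real.rpow_natCast, ← Real.rpow_mul hρ.le, ← Real.rpow_add hρ]
      apply Real.rpow_le_one hρ.le hρ1
      linarith
    have hGp : 0 ≤ Real.Gamma (s * N + 1) := (Real.Gamma_pos_of_pos (by positivity)).le
    have hff : (n.factorial : ℝ) ^ a * (n.factorial : ℝ) ^ (1 - a) = n.factorial := by
      rw [← Real.rpow_add (by positivity)]; simp
    rw [mul_div_assoc', div_le_iff₀ (by positivity)]
    calc y * (l * ρ ^ (-κ)) ^ n 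
        ≤ (K * A ^ N * Real.Gamma (s * N + 1) * ρ ^ N) * (l * ρ ^ (-κ)) ^ n := by
          gcongr; exact h N
      _ = K * A ^ N * Real.Gamma (s * N + 1) * l ^ n * (ρ ^ N * (ρ ^ (-κ)) ^ n) := by
          rw [mul_pow]; ring
      _ ≤ K * A ^ N * Real.Gamma (s * N + 1) * l ^ n * 1 := by gcongr
      _ ≤ K * (A' * (A' ^ κ) ^ n) * ((n.factorial : ℝ) ^ a * G' ^ (1 - a)) * l ^ n * 1 := by
          gcongr; exact hGam n
      _ = K * A' * G' ^ (1 - a) * (n.factorial : ℝ) ^ a * (1 / 2) ^ n * X ^ n := by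
          rw [hX, mul_pow, mul_pow, div_pow, one_pow]; field_simp
      _ ≤ K * A' * G' ^ (1 - a) * (n.factorial : ℝ) ^ a * (1 / 2) ^ n *
          (E * (n.factorial : ℝ) ^ (1 - a)) := by gcongr; exact hXE n
      _ = K * A' * G' ^ (1 - a) * E * (1 / 2) ^ n *
          ((n.factorial : ℝ) ^ a * (n.factorial : ℝ) ^ (1 - a)) := by ring
      _ = _ := by rw [hff]
  have hs1 : HasSum (fun n : ℕ => (l * ρ ^ (-κ)) ^ n / n.factorial) (Real.exp (l * ρ ^ (-κ))) := by
    rw [Real.exp_eq_exp_ℝ]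
    exact NormedSpace.expSeries_div_hasSum_exp _
  exact hasSum_le key (hs1.mul_left y) (hasSum_geometric_two.mul_left _)

lemma arg_le (β : ℝ) (hβ0 : 0 < β) (hβ : β < Real.pi) (z : ℂ) (hz : z ≠ 0)
    (h : ‖z‖ * Real.cos β ≤ z.re) : |z.arg| ≤ β := by
  by_contra hc
  push Not at hc
  have := Real.cos_lt_cos_of_nonneg_of_le_pi hβ0.le (Complex.abs_arg_le_pi z) hc
  rw [Real.cos_abs] at this
  rw [← Complex.norm_mul_cos_arg z] at h
  have hn : 0 < ‖z‖ := norm_pos_iff.mpr hz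
  nlinarith

lemma slit (β : ℝ) (hβ0 : 0 < β) (hβ : β < Real.pi) (z : ℂ) (hz : z ≠ 0)
    (h : ‖z‖ * Real.cos β ≤ z.re) : z ∈ Complex.slitPlane := by
  rw [Complex.mem_slitPlane_iff_arg]
  refine ⟨fun h' => ?_, hz⟩
  have := arg_le β hβ0 hβ z hz h
  rw [h', abs_of_pos Real.pi_pos] at this
  linarith

def Phi (κ δ : ℝ) (z : ℂ) : ℂ :=
  Complex.exp (-κ * Complex.log z) - (δ ^ (-2 * κ) : ℝ) * Complex.exp (κ * Complex.log z)

lemma Phi_re (κ δ : ℝ) (z : ℂ) (hz : z ≠ 0) :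
    (Phi κ δ z).re = (‖z‖ ^ (-κ) - δ ^ (-2 * κ) * ‖z‖ ^ κ) * Real.cos (κ * z.arg) := by
  have hn : 0 < ‖z‖ := norm_pos_iff.mpr hz
  unfold Phi
  rw [Complex.sub_re, Complex.re_ofReal_mul, ← Complex.ofReal_neg, Complex.exp_re, Complex.exp_re,
    Complex.re_ofReal_mul, Complex.re_ofReal_mul, Complex.im_ofReal_mul, Complex.im_ofReal_mul,
    Complex.log_re, Complex.log_im, Real.rpow_def_of_pos hn, Real.rpow_def_of_pos hn, neg_mul κ z.arg,
    Real.cos_neg, mul_comm (Real.log ‖z‖), mul_comm (Real.log ‖z‖)]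
  ring

lemma Phi_diff (κ δ : ℝ) (z : ℂ) (hz : z ∈ Complex.slitPlane) : DifferentiableAt ℂ (Phi κ δ) z := by
  unfold Phi
  have := Complex.differentiableAt_log hz
  fun_prop

lemma coef_nonneg (κ δ x : ℝ) (hκ : 0 < κ) (hx : 0 < x) (hxd : x ≤ δ) :
    0 ≤ x ^ (-κ) - δ ^ (-2 * κ) * x ^ κ := by
  have hδ : 0 < δ := hx.trans_le hxd
  have : x ^ (2 * κ) ≤ δ ^ (2 * κ) := Real.rpow_le_rpow hx.le hxd (by positivity)
  have e : x ^ (-κ) - δ ^ (-2 * κ) * x ^ κ = x ^ (-κ) * δ ^ (-2 * κ) * (δ ^ (2 * κ) - x ^ (2 * κ)) := by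
    have h1 : δ ^ (-2 * κ) * δ ^ (2 * κ) = 1 := by rw [← Real.rpow_add hδ]; simp
    have h2 : x ^ (-κ) * x ^ (2 * κ) = x ^ κ := by rw [← Real.rpow_add hx]; congr 1; ring
    rw [← h2]
    linear_combination (- x ^ (-κ)) * h1
  rw [e]
  have : 0 ≤ δ ^ (2 * κ) - x ^ (2 * κ) := by linarith
  positivity

lemma coef_pos (κ δ x : ℝ) (hκ : 0 < κ) (hx : 0 < x) (hxd : x < δ) :
    0 < x ^ (-κ) - δ ^ (-2 * κ) * x ^ κ := by
  have hδ : 0 < δ := hx.trans hxd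
  have : x ^ (2 * κ) < δ ^ (2 * κ) := Real.rpow_lt_rpow hx.le hxd (by positivity)
  have e : x ^ (-κ) - δ ^ (-2 * κ) * x ^ κ = x ^ (-κ) * δ ^ (-2 * κ) * (δ ^ (2 * κ) - x ^ (2 * κ)) := by
    have h1 : δ ^ (-2 * κ) * δ ^ (2 * κ) = 1 := by rw [← Real.rpow_add hδ]; simp
    have h2 : x ^ (-κ) * x ^ (2 * κ) = x ^ κ := by rw [← Real.rpow_add hx]; congr 1; ring
    rw [← h2]
    linear_combination (- x ^ (-κ)) * h1
  rw [e]
  have : 0 < δ ^ (2 * κ) - x ^ (2 * κ) := by linarith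
  positivity

lemma coef_zero (κ δ : ℝ) (hδ : 0 < δ) : δ ^ (-κ) - δ ^ (-2 * κ) * δ ^ κ = 0 := by
  rw [← Real.rpow_add hδ, sub_eq_zero]; congr 1; ring

lemma core (r δ β κ K : ℝ) (hδ : 0 < δ) (hβ0 : 0 < β) (hβ : β < Real.pi)
    (hκ : κ = Real.pi / (2 * β)) (p q F : ℂ → ℂ)
    (hp : ∀ t ∈ Metric.closedBall (0:ℂ) r, DifferentiableAt ℂ p t)
    (hq : ∀ t ∈ Metric.closedBall (0:ℂ) r, DifferentiableAt ℂ q t)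
    (hpr : ∀ t : ℂ, ‖t‖ = r → δ ≤ ‖p t‖)
    (hF : ∀ t ∈ Metric.closedBall (0:ℂ) r, p t ≠ 0 → q t ≠ 0 → ‖p t‖ * Real.cos β ≤ (p t).re →
      DifferentiableAt ℂ F t)
    (hK : ∀ t ∈ Metric.closedBall (0:ℂ) r, p t ≠ 0 → q t ≠ 0 → ‖p t‖ * Real.cos β ≤ (p t).re →
      ‖F t‖ ≤ K)
    (hM : ∀ l : ℝ, 0 ≤ l → ∃ M, ∀ t ∈ Metric.closedBall (0:ℂ) r, p t ≠ 0 → q t ≠ 0 →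
      ‖p t‖ * Real.cos β ≤ (p t).re → ‖p t‖ ≤ δ → ‖F t‖ * Real.exp (l * ‖p t‖ ^ (-κ)) ≤ M)
    (t₀ : ℂ) (ht₀ : ‖t₀‖ < r) (hq0 : q t₀ ≠ 0) (hp0 : p t₀ ≠ 0) (hpd : ‖p t₀‖ < δ)
    (hps : ‖p t₀‖ * Real.cos β < (p t₀).re) : F t₀ = 0 := by
  have hκ0 : 0 < κ := by rw [hκ]; have := Real.pi_pos; positivity
  have hκβ : κ * β = Real.pi / 2 := by rw [hκ]; field_simp
  have harg : ∀ z : ℂ, z ≠ 0 → ‖z‖ * Real.cos β ≤ z.re → |κ * z.arg| ≤ Real.pi / 2 := by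
    intro z hz h
    rw [abs_mul, abs_of_pos hκ0, ← hκβ]
    gcongr
    exact arg_le β hβ0 hβ z hz h
  have hcos : ∀ z : ℂ, z ≠ 0 → ‖z‖ * Real.cos β ≤ z.re → 0 ≤ Real.cos (κ * z.arg) := by
    intro z hz h
    have := abs_le.mp (harg z hz h)
    exact Real.cos_nonneg_of_neg_pi_div_two_le_of_le this.1 this.2
  have hPu : ∀ z : ℂ, z ≠ 0 → ‖z‖ * Real.cos β ≤ z.re → ‖z‖ ≤ δ →
      (Phi κ δ z).re ≤ ‖z‖ ^ (-κ) := by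
    intro z hz h hd
    have hn : 0 < ‖z‖ := norm_pos_iff.mpr hz
    rw [Phi_re κ δ z hz]
    have h1 := coef_nonneg κ δ ‖z‖ hκ0 hn hd
    have h2 := Real.cos_le_one (κ * z.arg)
    have h3 : 0 ≤ δ ^ (-2 * κ) * ‖z‖ ^ κ := by positivity
    nlinarith
  set V : Set ℂ := {t | t ∈ Metric.ball (0:ℂ) r ∧ (q t ≠ 0 ∧ p t ≠ 0 ∧ ‖p t‖ < δ ∧
    ‖p t‖ * Real.cos β < (p t).re)} with hV
  have hsub : Metric.ball (0:ℂ) r ⊆ Metric.closedBall 0 r := Metric.ball_subset_closedBall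
  have hpc : ContinuousOn p (Metric.closedBall 0 r) :=
    fun t ht => (hp t ht).continuousAt.continuousWithinAt
  have hqc : ContinuousOn q (Metric.closedBall 0 r) :=
    fun t ht => (hq t ht).continuousAt.continuousWithinAt
  have hVo : IsOpen V := by
    rw [isOpen_iff_mem_nhds]
    rintro t ⟨h0, h1, h2, h3, h4⟩
    have cp := (hp t (hsub h0)).continuousAt
    have cq := (hq t (hsub h0)).continuousAt
    have e0 := Metric.isOpen_ball.mem_nhds h0
    have e1 := cq.eventually_ne h1
    have e2 := cp.eventually_ne h2
    have e3 := cp.norm.eventually_lt continuousAt_const h3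
    have e4 := (cp.norm.mul continuousAt_const).eventually_lt
      (Complex.continuous_re.continuousAt.comp cp) h4
    filter_upwards [e0, e1, e2, e3, e4] with u u0 u1 u2 u3 u4
    exact ⟨u0, u1, u2, u3, u4⟩
  have hVc : ∀ t ∈ closure V, t ∈ Metric.closedBall (0:ℂ) r ∧ ‖p t‖ ≤ δ ∧
      ‖p t‖ * Real.cos β ≤ (p t).re := by
    intro t ht
    have hcl : IsClosed (Metric.closedBall (0:ℂ) r ∩
        p ⁻¹' {z : ℂ | ‖z‖ ≤ δ ∧ ‖z‖ * Real.cos β ≤ z.re}) := by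
      apply hpc.preimage_isClosed_of_isClosed Metric.isClosed_closedBall
      exact (isClosed_le continuous_norm continuous_const).inter
        (isClosed_le (continuous_norm.mul continuous_const) Complex.continuous_re)
    have : closure V ⊆ _ := closure_minimal (t := Metric.closedBall (0:ℂ) r ∩
        p ⁻¹' {z : ℂ | ‖z‖ ≤ δ ∧ ‖z‖ * Real.cos β ≤ z.re})
        (fun u hu => ⟨hsub hu.1, hu.2.2.2.1.le, hu.2.2.2.2.le⟩) hcl
    exact this ht
  obtain ⟨B, hB⟩ : ∃ B, ∀ t ∈ Metric.closedBall (0:ℂ) r, ‖p t * q t‖ ≤ B :=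
    (isCompact_closedBall (0:ℂ) r).exists_bound_of_continuousOn (hpc.mul hqc)
  have main : ∀ l : ℝ, 0 ≤ l →
      ‖F t₀‖ * Real.exp (l * (Phi κ δ (p t₀)).re) * ‖p t₀ * q t₀‖ ≤ K * B := by
    intro l hl
    set h : ℂ → ℂ := fun t => F t * Complex.exp (l * Phi κ δ (p t)) * (p t * q t) with hh
    have hnorm : ∀ t, ‖h t‖ = ‖F t‖ * Real.exp (l * (Phi κ δ (p t)).re) * ‖p t * q t‖ := by
      intro t
      rw [hh]
      simp only
      rw [norm_mul, norm_mul, Complex.norm_exp, Complex.re_ofReal_mul]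
    obtain ⟨M, hM⟩ := hM l hl
    have hd : ∀ t ∈ closure V, p t ≠ 0 → q t ≠ 0 → DifferentiableAt ℂ h t := by
      intro t ht h1 h2
      obtain ⟨c1, c2, c3⟩ := hVc t ht
      have d1 := hF t c1 h1 h2 c3
      have d2 := hp t c1
      have d3 := hq t c1
      have d4 : DifferentiableAt ℂ (fun t => Phi κ δ (p t)) t :=
        DifferentiableAt.comp t (Phi_diff κ δ (p t) (slit β hβ0 hβ _ h1 c3)) d2
      rw [hh]
      fun_prop
    have hdc : DiffContOnCl ℂ h V := by
      refine ⟨fun t ht => (hd t (subset_closure ht) ht.2.2.1 ht.2.1).differentiableWithinAt, ?_⟩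
      intro t ht
      by_cases h0 : p t * q t = 0
      · have hz : h t = 0 := by rw [hh]; simp only [h0, mul_zero]
        have hbd : ∀ u ∈ closure V, ‖h u‖ ≤ M * ‖p u * q u‖ := by
          intro u hu
          obtain ⟨c1, c2, c3⟩ := hVc u hu
          by_cases hu0 : p u * q u = 0
          · rw [hnorm, hu0]; simp
          · have hp1 := left_ne_zero_of_mul hu0
            have hq1 := right_ne_zero_of_mul hu0
            rw [hnorm]
            gcongr
            refine le_trans ?_ (hM u c1 hp1 hq1 c3 c2)
            gcongr
            exact hPu _ hp1 c3 c2
        unfold ContinuousWithinAt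
        rw [hz]
        apply squeeze_zero_norm' (a := fun u => M * ‖p u * q u‖)
        · filter_upwards [self_mem_nhdsWithin] with u hu using hbd u hu
        · have c1 := (hVc t ht).1
          have : ContinuousAt (fun u => M * ‖p u * q u‖) t :=
            continuousAt_const.mul (((hp t c1).continuousAt.mul (hq t c1).continuousAt).norm)
          have := this.continuousWithinAt (s := closure V)
          unfold ContinuousWithinAt at this
          simpa [h0] using this
      · exact (hd t ht (left_ne_zero_of_mul h0) (right_ne_zero_of_mul h0)).continuousAt.continuousWithinAt
    have hVb : Bornology.IsBounded V := Metric.isBounded_ball.subset (fun t ht => ht.1)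
    have hmem : t₀ ∈ V := ⟨by simpa using ht₀, hq0, hp0, hpd, hps⟩
    have hKB : ∀ t ∈ Metric.closedBall (0:ℂ) r, p t ≠ 0 → q t ≠ 0 → ‖p t‖ * Real.cos β ≤ (p t).re →
        ‖F t‖ * ‖p t * q t‖ ≤ K * B := by
      intro t h1 h2 h3 h4
      have := hK t h1 h2 h3 h4
      exact mul_le_mul this (hB t h1) (norm_nonneg _) ((norm_nonneg _).trans this)
    rw [← hnorm]
    refine Complex.norm_le_of_forall_mem_frontier_norm_le hVb hdc ?_ (subset_closure hmem)
    intro t ht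
    have htc : t ∈ closure V := frontier_subset_closure ht
    have htV : t ∉ V := by
      rw [hVo.frontier_eq] at ht; exact ht.2
    obtain ⟨c1, c2, c3⟩ := hVc t htc
    rw [hnorm]
    by_cases h0 : p t * q t = 0
    · rw [h0]
      simp only [norm_zero, mul_zero]
      exact (mul_nonneg (norm_nonneg _) (norm_nonneg _)).trans
        (hKB t₀ (hsub hmem.1) hp0 hq0 hps.le)
    have hp1 := left_ne_zero_of_mul h0
    have hq1 := right_ne_zero_of_mul h0
    have hPz : (Phi κ δ (p t)).re = 0 := by
      rw [Phi_re κ δ _ hp1]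
      by_cases hd' : ‖p t‖ = δ
      · rw [hd', coef_zero κ δ hδ, zero_mul]
      have hlt : ‖p t‖ < δ := lt_of_le_of_ne c2 hd'
      have htr : t ∈ Metric.ball (0:ℂ) r := by
        rw [mem_ball_zero_iff]
        rw [mem_closedBall_zero_iff] at c1
        refine lt_of_le_of_ne c1 fun he => ?_
        linarith [hpr t he]
      have hedge : (p t).re ≤ ‖p t‖ * Real.cos β := by
        by_contra hcon
        push Not at hcon
        exact htV ⟨htr, hq1, hp1, hlt, hcon⟩
      have hn : 0 < ‖p t‖ := norm_pos_iff.mpr hp1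
      have hce : Real.cos |(p t).arg| = Real.cos β := by
        rw [Real.cos_abs]
        have : ‖p t‖ * Real.cos (p t).arg = ‖p t‖ * Real.cos β := by
          rw [Complex.norm_mul_cos_arg]; exact le_antisymm hedge c3
        exact mul_left_cancel₀ hn.ne' this
      have hab : |(p t).arg| = β :=
        Real.injOn_cos ⟨abs_nonneg _, Complex.abs_arg_le_pi _⟩ ⟨hβ0.le, hβ.le⟩ hce
      have : Real.cos (κ * (p t).arg) = 0 := by
        rw [← Real.cos_abs, abs_mul, abs_of_pos hκ0, hab, hκβ, Real.cos_pi_div_two]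
      rw [this, mul_zero]
    rw [hPz, mul_zero, Real.exp_zero, mul_one]
    exact hKB t c1 hp1 hq1 c3
  have hn : 0 < ‖p t₀‖ := norm_pos_iff.mpr hp0
  have hargs : |(p t₀).arg| < β := by
    refine lt_of_le_of_ne (arg_le β hβ0 hβ _ hp0 hps.le) fun he => ?_
    rw [← he, Real.cos_abs, Complex.norm_mul_cos_arg] at hps
    exact lt_irrefl _ hps
  have hbpos : 0 < (Phi κ δ (p t₀)).re := by
    rw [Phi_re κ δ _ hp0]
    apply mul_pos (coef_pos κ δ _ hκ0 hn hpd)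
    have : |κ * (p t₀).arg| < Real.pi / 2 := by
      rw [abs_mul, abs_of_pos hκ0, ← hκβ]; gcongr
    have := abs_lt.mp this
    exact Real.cos_pos_of_mem_Ioo ⟨this.1, this.2⟩
  by_contra hne
  have hFn : 0 < ‖F t₀‖ := norm_pos_iff.mpr hne
  have hqn : 0 < ‖p t₀ * q t₀‖ := norm_pos_iff.mpr (mul_ne_zero hp0 hq0)
  set b := (Phi κ δ (p t₀)).re
  set c := ‖F t₀‖ * ‖p t₀ * q t₀‖ with hc
  have hcp : 0 < c := by positivity
  have hl0 : 0 ≤ |K * B| / (c * b) := by positivity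
  have h1 := main _ hl0
  have h2 := Real.add_one_le_exp (|K * B| / (c * b) * b)
  have h3 : c * (|K * B| / (c * b) * b) = |K * B| := by field_simp
  have h4 := le_abs_self (K * B)
  have h5 : c * (|K * B| / (c * b) * b + 1) ≤ c * Real.exp (|K * B| / (c * b) * b) := by gcongr
  have h6 : ‖F t₀‖ * Real.exp (|K * B| / (c * b) * b) * ‖p t₀ * q t₀‖ =
      c * Real.exp (|K * B| / (c * b) * b) := by rw [hc]; ring
  linarith [mul_add c (|K * B| / (c * b) * b) 1]

lemma mem_poly (d : ℕ) (ρ : ℝ) (hρ : 0 < ρ) (x : Fin d → ℂ) : x ∈ polydisk d ρ ↔ ‖x‖ < ρ := by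
  rw [pi_norm_lt_iff hρ]; rfl

lemma poly_eq (d : ℕ) (ρ : ℝ) (hρ : 0 < ρ) : polydisk d ρ = Metric.ball 0 ρ := by
  ext x
  rw [mem_poly d ρ hρ, mem_ball_zero_iff]

/-- a good complex direction -/
lemma direction (d : ℕ) (R : ℝ) (hR : 0 < R)
    (P : (Fin d → ℂ) → ℂ) (hP : AnalyticOnNhd ℂ P (polydisk d R))
    (hPne : ∃ x ∈ polydisk d R, P x ≠ 0) :
    ∃ e ∈ polydisk d R, ∃ r > 0, r < 1 ∧ ∀ t : ℂ, ‖t‖ = r → P (t • e) ≠ 0 := by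
  obtain ⟨e, he, hPe⟩ := hPne
  refine ⟨e, he, ?_⟩
  set U : Set ℂ := {t | t • e ∈ polydisk d R} with hU
  have hconv : Convex ℝ U := by
    have h1 : Convex ℝ (polydisk d R) := by rw [poly_eq d R hR]; exact convex_ball _ _
    exact h1.linear_preimage ((LinearMap.toSpanSingleton ℂ (Fin d → ℂ) e).restrictScalars ℝ)
  have han : AnalyticOnNhd ℂ (fun t : ℂ => P (t • e)) U := by
    intro t ht
    have h1 : AnalyticAt ℂ (fun t : ℂ => t • e) t := by fun_prop
    exact AnalyticAt.comp' (hP (t • e) ht) h1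
  have h0 : (0:ℂ) ∈ U := by
    rw [hU, mem_setOf_eq, zero_smul, poly_eq d R hR]; exact Metric.mem_ball_self hR
  have h1 : (1:ℂ) ∈ U := by rw [hU, mem_setOf_eq, one_smul]; exact he
  rcases (han 0 h0).eventually_eq_zero_or_eventually_ne_zero with h | h
  · have := han.eqOn_zero_of_preconnected_of_eventuallyEq_zero hconv.isPreconnected h0 h h1
    simp at this
    exact absurd this hPe
  · rw [eventually_nhdsWithin_iff, Metric.eventually_nhds_iff] at h
    obtain ⟨ε, hε, h⟩ := h
    have hm : 0 < min ε 1 := lt_min hε one_pos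
    refine ⟨min ε 1 / 2, by positivity, by linarith [min_le_right ε 1], ?_⟩
    intro t ht
    apply h
    · rw [dist_zero_right, ht]; linarith [min_le_left ε 1]
    · intro h'
      simp at h'
      rw [h', norm_zero] at ht
      linarith

/-- **Watson's lemma for asymptotics with respect to a germ** (Lemma 7.19).
If `Π = Π_P(θ₁,θ₂;R)` has opening `θ₂ − θ₁ > sπ` and a holomorphic `f` on `Π` has the zero
series as `P`-`s`-Gevrey asymptotic expansion, then `f` vanishes identically near `0`. -/
theorem watson_lemma_for_germ_asymptotics
    (d : ℕ) (hd : 1 ≤ d) (s : ℝ) (hs : 0 < s) (R : ℝ) (hR : 0 < R)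
    (P : (Fin d → ℂ) → ℂ) (hP : AnalyticOnNhd ℂ P (polydisk d R))
    (hP0 : P 0 = 0) (hPne : ∃ x ∈ polydisk d R, P x ≠ 0)
    (θ₁ θ₂ : ℝ) (hθ : θ₁ < θ₂) (hθ2 : θ₂ ≤ θ₁ + 2 * Real.pi)
    (hopen : s * Real.pi < θ₂ - θ₁)
    (f : (Fin d → ℂ) → ℂ) (hf : AnalyticOnNhd ℂ f (PSector d P θ₁ θ₂ R))
    (K A : ℝ) (hK : 0 < K) (hA : 0 < A)
    (hest : ∀ N : ℕ, ∀ x ∈ PSector d P θ₁ θ₂ R,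
      ‖f x‖ ≤
        K * A ^ N * Real.Gamma (s * N + 1) * ‖P x‖ ^ N) :
    ∃ ρ > 0, ∀ x ∈ PSector d P θ₁ θ₂ R ∩ polydisk d ρ, f x = 0 := by
  obtain ⟨e, he, r, hr, hr1, hPr⟩ := direction d R hR P hP hPne
  have hRo : IsOpen (polydisk d R) := by rw [poly_eq d R hR]; exact Metric.isOpen_ball
  have hin : ∀ t : ℂ, ‖t‖ ≤ r → t • e ∈ polydisk d R := by
    intro t ht
    rw [mem_poly d R hR] at he ⊢
    rw [norm_smul]
    nlinarith [norm_nonneg e, norm_nonneg t]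
  have hcont : ∀ t : ℂ, ‖t‖ ≤ r →
      ContinuousAt (fun z : (Fin d → ℂ) × ℂ => P (z.1 + z.2 • e)) (0, t) := by
    intro t ht
    have h1 : ContinuousAt P (0 + t • e) := by
      rw [zero_add]; exact (hP _ (hin t ht)).continuousAt
    exact ContinuousAt.comp (g := P) (f := fun z : (Fin d → ℂ) × ℂ => z.1 + z.2 • e) h1
      (by fun_prop)
  obtain ⟨δ, hδ, hδ1, hδr⟩ : ∃ δ > 0, δ ≤ 1 ∧ ∀ t ∈ Metric.sphere (0:ℂ) r, δ < ‖P (t • e)‖ := by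
    have hc : ContinuousOn (fun t : ℂ => ‖P (t • e)‖) (Metric.sphere (0:ℂ) r) := by
      intro t ht
      have ht' : ‖t‖ = r := by simpa using ht
      have h1 : ContinuousAt P (t • e) := (hP _ (hin t ht'.le)).continuousAt
      have h2 : ContinuousAt (fun t : ℂ => P (t • e)) t :=
        ContinuousAt.comp (g := P) (f := fun t : ℂ => t • e) h1 (by fun_prop)
      exact h2.norm.continuousWithinAt
    obtain ⟨t, ht, hmin⟩ := (isCompact_sphere (0:ℂ) r).exists_isMinOn
      (NormedSpace.sphere_nonempty.mpr hr.le) hc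
    have hpos : 0 < ‖P (t • e)‖ := norm_pos_iff.mpr (hPr t (by simpa using ht))
    refine ⟨min (‖P (t • e)‖ / 2) 1, by positivity, min_le_right _ _, ?_⟩
    intro u hu
    have h1 : ‖P (t • e)‖ ≤ ‖P (u • e)‖ := hmin hu
    linarith [min_le_left (‖P (t • e)‖ / 2) 1]
  have ev1 : ∀ᶠ x : Fin d → ℂ in nhds 0, ∀ t ∈ Metric.sphere (0:ℂ) r, δ < ‖P (x + t • e)‖ := by
    apply (isCompact_sphere (0:ℂ) r).eventually_forall_of_forall_eventually
    intro t ht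
    have h1 := (hcont t (by simpa using (mem_sphere_zero_iff_norm.mp ht).le)).norm
    apply continuousAt_const.eventually_lt h1
    simpa using hδr t ht
  have ev2 : ∀ᶠ x : Fin d → ℂ in nhds 0, ∀ t ∈ Metric.closedBall (0:ℂ) r,
      x + t • e ∈ polydisk d R := by
    apply (isCompact_closedBall (0:ℂ) r).eventually_forall_of_forall_eventually
    intro t ht
    have h1 : ContinuousAt (fun z : (Fin d → ℂ) × ℂ => z.1 + z.2 • e) (0, t) := by fun_prop
    apply h1
    apply hRo.mem_nhds
    simpa using hin t (by simpa using ht)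
  have ev3 : ∀ᶠ x : Fin d → ℂ in nhds 0, ‖P x‖ < δ := by
    have h1 : ContinuousAt P 0 := by
      have := (hP _ (hin 0 (by simpa using hr.le))).continuousAt
      simpa using this
    apply h1.norm.eventually_lt continuousAt_const
    simpa [hP0] using hδ
  obtain ⟨ρ, hρ, hev⟩ := Metric.eventually_nhds_iff.mp (ev1.and (ev2.and ev3))
  refine ⟨ρ, hρ, ?_⟩
  rintro x ⟨hx, hxρ⟩
  obtain ⟨hb1, hb2, hb3⟩ := hev (by rw [dist_zero_right]; exact (mem_poly d ρ hρ x).mp hxρ)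
  obtain ⟨hxj, hPx, θ, hθm, hPθ⟩ := id hx
  -- the angles
  set α := (θ₁ + θ₂) / 2 with hα
  obtain ⟨β, hβ1, hβ2, hβ3⟩ : ∃ β, s * Real.pi / 2 < β ∧ |θ - α| < β ∧ β < (θ₂ - θ₁) / 2 := by
    have h1 : |θ - α| < (θ₂ - θ₁) / 2 := by
      rw [abs_lt]; constructor <;> rw [hα] <;> linarith [hθm.1, hθm.2]
    obtain ⟨β, h2, h3⟩ := exists_between (max_lt (show s * Real.pi / 2 < (θ₂ - θ₁) / 2 by linarith) h1)
    exact ⟨β, (le_max_left _ _).trans_lt h2, (le_max_right _ _).trans_lt h2, h3⟩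
  have hβ0 : 0 < β := (abs_nonneg _).trans_lt hβ2
  have hβπ : β < Real.pi := by linarith
  have hpi := Real.pi_pos
  set κ := Real.pi / (2 * β) with hκ
  have hκ0 : 0 < κ := by positivity
  have hsk : s * κ < 1 := by
    rw [hκ, mul_div_assoc', div_lt_one (by positivity)]; linarith
  set c : ℂ := Complex.exp ((-α : ℝ) * Complex.I) with hc
  have hcn : ‖c‖ = 1 := Complex.norm_exp_ofReal_mul_I _
  have hcα : Complex.exp (α * Complex.I) * c = 1 := by
    rw [hc, ← Complex.exp_add]; simp
  have hpn : ∀ t : ℂ, ‖c * P (x + t • e)‖ = ‖P (x + t • e)‖ := by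
    intro t; rw [norm_mul, hcn, one_mul]
  have hq0 : ∀ t : ℂ, ∏ j, (x j + t * e j) ≠ 0 → ∀ j, x j + t * e j ≠ 0 := by
    intro t h j
    exact Finset.prod_ne_zero_iff.mp h j (Finset.mem_univ j)
  have hsec : ∀ t ∈ Metric.closedBall (0:ℂ) r, c * P (x + t • e) ≠ 0 →
      ∏ j, (x j + t * e j) ≠ 0 →
      ‖c * P (x + t • e)‖ * Real.cos β ≤ (c * P (x + t • e)).re →
      x + t • e ∈ PSector d P θ₁ θ₂ R := by
    intro t ht h1 h2 h3
    have ha := abs_le.mp (arg_le β hβ0 hβπ _ h1 h3)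
    refine ⟨fun j => ⟨norm_pos_iff.mpr (hq0 t h2 j), hb2 t ht j⟩, right_ne_zero_of_mul h1,
      α + (c * P (x + t • e)).arg, ⟨?_, ?_⟩, ?_⟩
    · rw [hα]; linarith
    · rw [hα]; linarith
    · have h4 := Complex.norm_mul_exp_arg_mul_I (c * P (x + t • e))
      rw [hpn] at h4
      push_cast
      rw [add_mul, Complex.exp_add]
      linear_combination (- P (x + t • e)) * hcα - Complex.exp (α * Complex.I) * h4
  have hfin := core r δ β κ K hδ hβ0 hβπ hκ (fun t => c * P (x + t • e))
    (fun t => ∏ j, (x j + t * e j)) (fun t => f (x + t • e)) ?_ ?_ ?_ ?_ ?_ ?_ 0 (by simpa using hr)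
    ?_ ?_ ?_ ?_
  · simpa using hfin
  · intro t ht
    have h1 : DifferentiableAt ℂ P (x + t • e) := (hP _ (hb2 t ht)).differentiableAt
    have h2 : DifferentiableAt ℂ (fun t : ℂ => P (x + t • e)) t :=
      DifferentiableAt.comp (g := P) (f := fun t : ℂ => x + t • e) t h1 (by fun_prop)
    exact h2.const_mul c
  · intro t ht
    fun_prop
  · intro t ht
    rw [hpn]
    exact (hb1 t (by simpa using ht)).le
  · intro t ht h1 h2 h3
    have h4 : DifferentiableAt ℂ f (x + t • e) := (hf _ (hsec t ht h1 h2 h3)).differentiableAt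
    exact DifferentiableAt.comp (g := f) (f := fun t : ℂ => x + t • e) t h4 (by fun_prop)
  · intro t ht h1 h2 h3
    have := hest 0 _ (hsec t ht h1 h2 h3)
    simpa using this
  · intro l hl
    obtain ⟨M, hM⟩ := gevrey s κ K A hs hκ0 hsk hK hA l hl
    refine ⟨M, ?_⟩
    intro t ht h1 h2 h3 h4
    rw [hpn] at h4 ⊢
    exact hM _ _ (norm_nonneg _) (norm_pos_iff.mpr (right_ne_zero_of_mul h1)) (h4.trans hδ1)
      (fun N => hest N _ (hsec t ht h1 h2 h3))
  · simp only [zero_mul, add_zero]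
    exact Finset.prod_ne_zero_iff.mpr fun j _ => norm_pos_iff.mp (hxj j).1
  · simp only [zero_smul, add_zero]
    exact mul_ne_zero (Complex.exp_ne_zero _) hPx
  · rw [hpn]
    simpa using hb3
  · rw [hpn]
    simp only [zero_smul, add_zero]
    have h1 : c * P x = (‖P x‖ : ℂ) * Complex.exp ((θ - α : ℝ) * Complex.I) := by
      have : Complex.exp ((θ - α : ℝ) * Complex.I) = c * Complex.exp (θ * Complex.I) := by
        rw [hc, ← Complex.exp_add]; congr 1; push_cast; ring
      rw [this]
      linear_combination c * hPθ
    rw [h1, Complex.re_ofReal_mul, Complex.exp_ofReal_mul_I_re, ← Real.cos_abs (θ - α)]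
    have h2 := Real.cos_lt_cos_of_nonneg_of_le_pi (abs_nonneg _) hβπ.le hβ2
    have h3 : 0 < ‖P x‖ := norm_pos_iff.mpr hPx
    gcongr
end
end

section
/- Borel–Ritt–Gevrey theorem for asymptotics with respect to a germ (Proposition 7.14): Let d ≥ 1, s > 0, P holomorphic on D(0;R) with P(0) = 0 and P not identically zero, and let Π = Π_P(θ_1,θ_2;r) be a P-sector with θ_2 − θ_1 < sπ. Suppose (g_n) is a sequence of bounded holomorphic functions on D(0;ρ_1) with 0 < ρ_1 ≤ R and there are constants C, A > 0 with sup_{D(0;ρ_1)}|g_n| ≤ C·A^n·Γ(sn+1) for all n ∈ ℕ. Then there exist ρ > 0, a holomorphic function f on Π ∩ D(0;ρ), and constants K, B > 0 such that |f(x) − Σ_{n<N} g_n(x)·P(x)^n| ≤ K·B^N·Γ(sN+1)·|P(x)|^N for every N ∈ ℕ and every x ∈ Π ∩ D(0;ρ). -/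
open Set Complex

noncomputable section

lemma br_iter_bound {E : Type*} [NormedAddCommGroup E] [NormedSpace ℂ E]
    (f : E → ℂ) (x₀ : E) (ρ δ M : ℝ) (hδ : 0 < δ)
    (hf : AnalyticOnNhd ℂ f (Metric.ball x₀ ρ)) (hb : ∀ x ∈ Metric.ball x₀ ρ, ‖f x‖ ≤ M) (k : ℕ) :
    ∀ x ∈ Metric.ball x₀ (ρ - k * δ), ‖iteratedFDeriv ℂ k f x‖ ≤ M * (2 / δ) ^ k := by
  induction k with
  | zero => intro x hx; simpa using hb x (by simpa using hx)
  | succ k ih =>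
    intro x hx
    have hsub : Metric.ball x δ ⊆ Metric.ball x₀ (ρ - k * δ) := by
      apply Metric.ball_subset_ball'
      rw [Metric.mem_ball] at hx
      push_cast at hx
      linarith
    have hsub2 : Metric.ball x δ ⊆ Metric.ball x₀ ρ := hsub.trans (Metric.ball_subset_ball (by
      have : 0 ≤ k * δ := by positivity
      linarith))
    have hA := hf.iteratedFDeriv k
    rw [← norm_fderiv_iteratedFDeriv]
    have hxx := ih x (hsub (Metric.mem_ball_self hδ))
    have := norm_fderiv_le_div_of_mapsTo_ball (f := iteratedFDeriv ℂ k f) (c := x) (R₁ := δ)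
      (R₂ := 2 * (M * (2 / δ) ^ k)) (fun y hy => (hA y (hsub2 hy)).differentiableAt.differentiableWithinAt)
      (fun y hy => by
        have := ih y (hsub hy)
        rw [Metric.mem_closedBall, dist_eq_norm]
        exact (norm_sub_le _ _).trans (by linarith)) hδ
    refine this.trans (le_of_eq ?_)
    rw [pow_succ]; ring

lemma br_taylor {E : Type*} [NormedAddCommGroup E] [NormedSpace ℂ E]
    (f : E → ℂ) (x₀ : E) (ρ : ℝ) (hρ : 0 < ρ)
    (hf : AnalyticOnNhd ℂ f (Metric.ball x₀ ρ)) (y : E) (hy : ‖y‖ < ρ / 2) :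
    HasSum (fun k : ℕ => ((k.factorial : ℂ)⁻¹ • iteratedFDeriv ℂ k f x₀) (fun _ => y)) (f (x₀ + y)) := by
  obtain ⟨p, R, hp⟩ := hf x₀ (Metric.mem_ball_self hρ)
  set u : ℂ →L[ℂ] E := (ContinuousLinearMap.id ℂ ℂ).smulRight y
  have h1 : HasFPowerSeriesAt (fun t : ℂ => f (x₀ + t • y)) (p.compContinuousLinearMap u) 0 := by
    have hp' : HasFPowerSeriesOnBall (fun z => f (x₀ + z)) p (u 0) R := by
      simpa [add_comm] using hp.comp_sub (-x₀)
    exact ⟨_, hp'.compContinuousLinearMap⟩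
  have hd : DifferentiableOn ℂ (fun t : ℂ => f (x₀ + t • y)) (Metric.closedBall 0 (2:NNReal)) := by
    intro t ht
    have : x₀ + t • y ∈ Metric.ball x₀ ρ := by
      simp [norm_smul] at ht ⊢
      nlinarith [norm_nonneg y]
    have h3 := (hf _ this).differentiableAt
    exact (DifferentiableAt.comp (g := f) t h3 (by fun_prop)).differentiableWithinAt
  have h2 := hd.hasFPowerSeriesOnBall (by norm_num)
  rw [← h1.eq_formalMultilinearSeries ⟨_, h2⟩] at h2
  have h3 := h2.hasSum (y := 1) (by simp)
  simp only [zero_add, one_smul, FormalMultilinearSeries.compContinuousLinearMap_apply] at h3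
  suffices h : ∀ k : ℕ, ((k.factorial : ℂ)⁻¹ • iteratedFDeriv ℂ k f x₀) (fun _ => y)
      = p k (u ∘ fun _ => (1:ℂ)) by
    rw [funext h]; exact h3
  intro k
  have := hp.factorial_smul y k
  simp only [_root_.smul_apply, ← this]
  have e : (fun _ : Fin k => y) = (u ∘ fun _ => (1:ℂ)) := by ext; simp [u]
  rw [← e]
  simp [nsmul_eq_mul]
  rw [inv_mul_cancel_left₀]
  exact_mod_cast k.factorial_ne_zero

lemma br_tsum_analytic {E : Type*} [NormedAddCommGroup E] [NormedSpace ℂ E]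
    (f : ℕ → E → ℂ) (x₀ : E) (ρ : ℝ) (hρ : 0 < ρ) (M : ℕ → ℝ) (hM : Summable M)
    (hf : ∀ n, AnalyticOnNhd ℂ (f n) (Metric.ball x₀ ρ))
    (hb : ∀ n, ∀ x ∈ Metric.ball x₀ ρ, ‖f n x‖ ≤ M n) :
    AnalyticAt ℂ (fun x => ∑' n, f n x) x₀ := by
  have hM0 : ∀ n, 0 ≤ M n := fun n => (norm_nonneg _).trans (hb n x₀ (Metric.mem_ball_self hρ))
  set c : ℝ := 4 * Real.exp 1 / ρ with hc
  have hc0 : 0 < c := by positivity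
  let q : ℕ → FormalMultilinearSeries ℂ E ℂ := fun n k =>
    (k.factorial : ℂ)⁻¹ • iteratedFDeriv ℂ k (f n) x₀
  have hq : ∀ n k, ‖q n k‖ ≤ M n * c ^ k := by
    intro n k
    simp only [q, norm_smul, norm_inv, Complex.norm_natCast]
    rcases Nat.eq_zero_or_pos k with rfl | hk
    · simpa using hb n x₀ (Metric.mem_ball_self hρ)
    have hk' : (0:ℝ) < k := by exact_mod_cast hk
    have := br_iter_bound (f n) x₀ ρ (ρ / (2 * k)) (M n) (by positivity) (hf n) (hb n) k x₀
      (Metric.mem_ball_self (by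
        have : (k:ℝ) * (ρ / (2 * k)) = ρ / 2 := by field_simp
        rw [this]; linarith))
    have h2 := Real.pow_div_factorial_le_exp k hk'.le k
    have h3 : Real.exp (k:ℝ) = Real.exp 1 ^ k := by rw [← Real.exp_nat_mul]; simp
    have h4 : (2 / (ρ / (2 * k)) : ℝ) = (4 / ρ) * k := by field_simp; norm_num
    calc _ ≤ ((k.factorial:ℝ))⁻¹ * (M n * (2 / (ρ / (2 * k))) ^ k) := by gcongr
      _ = M n * (4 / ρ) ^ k * ((k:ℝ) ^ k / k.factorial) := by
        rw [h4, mul_pow]; ring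
      _ ≤ M n * (4 / ρ) ^ k * Real.exp 1 ^ k := by
        rw [← h3]; gcongr
        exact mul_nonneg (hM0 n) (by positivity)
      _ = _ := by rw [hc, mul_assoc, ← mul_pow]; ring
  have hqs : ∀ k, Summable (fun n => q n k) := fun k =>
    Summable.of_norm_bounded (hM.mul_right _) (fun n => hq n k)
  let Q : FormalMultilinearSeries ℂ E ℂ := fun k => ∑' n, q n k
  have hc1 : 4 ≤ c * ρ := by
    rw [hc]; field_simp; have := Real.add_one_le_exp 1; linarith
  obtain ⟨rr, hrr⟩ : ∃ rr : NNReal, (rr : ℝ) = 1 / (2 * c) := ⟨⟨1 / (2 * c), by positivity⟩, rfl⟩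
  refine ⟨Q, (rr : ENNReal), ?_, ?_, ?_⟩
  · apply Q.le_radius_of_bound (∑' n, M n)
    intro k
    have h1 : ‖Q k‖ ≤ (∑' n, M n) * c ^ k := by
      rw [← tsum_mul_right]
      exact tsum_of_norm_bounded (hM.mul_right _).hasSum (fun n => hq n k)
    have h0 : 0 ≤ ∑' n, M n := tsum_nonneg hM0
    calc _ ≤ (∑' n, M n) * c ^ k * (1 / (2 * c)) ^ k := by
          rw [hrr]; gcongr
      _ = (∑' n, M n) * (1/2) ^ k := by rw [mul_assoc, ← mul_pow]; congr 2; field_simp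
      _ ≤ (∑' n, M n) * 1 := by gcongr; exact pow_le_one₀ (by norm_num) (by norm_num)
      _ = _ := mul_one _
  · have : (0:ℝ) < rr := by rw [hrr]; positivity
    exact_mod_cast this
  · intro y hy
    have hy' : ‖y‖ < 1 / (2 * c) := by
      rw [Metric.eball_coe] at hy
      rw [← hrr]; simpa using hy
    have hyc : c * ‖y‖ ≤ 1 / 2 := by
      calc c * ‖y‖ ≤ c * (1 / (2 * c)) := by gcongr
        _ = _ := by field_simp
    have hy2 : ‖y‖ < ρ / 2 := by
      by_contra! h
      nlinarith
    have hbd : ∀ n k, ‖q n k (fun _ => y)‖ ≤ M n * (1/2) ^ k := by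
      intro n k
      calc _ ≤ ‖q n k‖ * ∏ i : Fin k, ‖y‖ := (q n k).le_opNorm _
        _ ≤ M n * c ^ k * ‖y‖ ^ k := by simp; gcongr; exact hq n k
        _ = M n * (c * ‖y‖) ^ k := by rw [mul_pow]; ring
        _ ≤ _ := by gcongr; exact hM0 n
    have hS : Summable (fun z : ℕ × ℕ => q z.1 z.2 (fun _ => y)) := by
      apply Summable.of_norm_bounded
        (hM.mul_of_nonneg (summable_geometric_of_lt_one (r := (1/2 : ℝ)) (by norm_num) (by norm_num)) hM0 (fun k => by positivity))
      intro z; exact hbd _ _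
    have hT : ∀ n, HasSum (fun k => q n k (fun _ => y)) (f n (x₀ + y)) := fun n =>
      br_taylor (f n) x₀ ρ hρ (hf n) y hy2
    have hF : ∀ k, HasSum (fun n => q n k (fun _ => y)) (Q k (fun _ => y)) := fun k =>
      ContinuousMultilinearMap.hasSum_eval (hqs k).hasSum _
    have e1 := hS.hasSum.prod_fiberwise hT
    have e2 := ((Equiv.prodComm ℕ ℕ).hasSum_iff.mpr hS.hasSum).prod_fiberwise hF
    rw [e1.tsum_eq]
    exact e2

def brI (a T : ℝ) (w : ℂ) : ℂ := ∫ u in Ioc 0 T, ((u ^ a : ℝ) : ℂ) * Complex.exp (-(w * u))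

lemma brI_norm_integrand (a : ℝ) (w : ℂ) (u : ℝ) (hu : 0 < u) :
    ‖((u ^ a : ℝ) : ℂ) * Complex.exp (-(w * u))‖ = u ^ a * Real.exp (-(w.re * u)) := by
  rw [norm_mul, Complex.norm_exp, Complex.norm_real, Real.norm_of_nonneg (Real.rpow_nonneg hu.le a)]
  simp

lemma brI_cont (a : ℝ) (ha : 0 ≤ a) (w : ℂ) :
    Continuous (fun u : ℝ => ((u ^ a : ℝ) : ℂ) * Complex.exp (-(w * u))) := by
  have := Real.continuous_rpow_const ha
  fun_prop

lemma br_lin_deriv (u : ℝ) (w : ℂ) : HasDerivAt (fun w : ℂ => -(w * u)) (-u : ℂ) w := by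
  have := ((hasDerivAt_id w).mul_const (u : ℂ)).neg
  rw [one_mul] at this
  exact this

lemma brI_bound (a T : ℝ) (ha : 0 ≤ a) (hT : 0 < T) (w : ℂ) :
    ‖brI a T w‖ ≤ T ^ a * Real.exp (‖w‖ * T) * T := by
  have := MeasureTheory.norm_setIntegral_le_of_norm_le_const (μ := MeasureTheory.volume)
    (s := Ioc 0 T) (f := fun u : ℝ => ((u ^ a : ℝ) : ℂ) * Complex.exp (-(w * u)))
    (C := T ^ a * Real.exp (‖w‖ * T)) (by simp) (by
      intro u hu
      rw [brI_norm_integrand a w u hu.1]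
      have h1 := Real.rpow_le_rpow hu.1.le hu.2 ha
      have h2 : -(w.re * u) ≤ ‖w‖ * T := by
        have := Complex.abs_re_le_norm w
        have h3 := neg_abs_le w.re
        nlinarith [hu.1, hu.2, norm_nonneg w]
      gcongr)
  simpa [brI, hT.le] using this

lemma brI_diff (a T : ℝ) (ha : 0 ≤ a) (hT : 0 < T) : Differentiable ℂ (brI a T) := by
  intro w₀
  have hc := brI_cont a ha
  have key := hasDerivAt_integral_of_dominated_loc_of_deriv_le (𝕜 := ℂ)
    (μ := MeasureTheory.volume.restrict (Ioc 0 T)) (x₀ := w₀) (s := Metric.ball w₀ 1)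
    (F := fun (w : ℂ) (u : ℝ) => ((u ^ a : ℝ) : ℂ) * Complex.exp (-(w * u)))
    (F' := fun (w : ℂ) (u : ℝ) => ((u ^ a : ℝ) : ℂ) * (Complex.exp (-(w * u)) * (-u)))
    (bound := fun _ => T ^ a * (Real.exp ((‖w₀‖ + 1) * T) * T))
    (Metric.ball_mem_nhds _ one_pos)
    (Filter.Eventually.of_forall fun w => (hc w).aestronglyMeasurable)
    (((hc w₀).integrableOn_Icc (a := 0) (b := T)).mono_set Ioc_subset_Icc_self)
    (by
      have h2 := Real.continuous_rpow_const ha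
      have : Continuous (fun (u : ℝ) => ((u ^ a : ℝ) : ℂ) * (Complex.exp (-(w₀ * u)) * (-u))) := by
        fun_prop
      exact this.aestronglyMeasurable)
    (by
      refine (MeasureTheory.ae_restrict_iff' measurableSet_Ioc).mpr (Filter.Eventually.of_forall ?_)
      intro u hu w hw
      rw [← mul_assoc, norm_mul, brI_norm_integrand a w u hu.1, mul_assoc]
      have h1 := Real.rpow_le_rpow hu.1.le hu.2 ha
      have h4 : ‖w‖ ≤ ‖w₀‖ + 1 := by
        have := norm_le_norm_add_norm_sub' w w₀
        rw [Metric.mem_ball, dist_eq_norm] at hw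
        linarith
      have h2 : -(w.re * u) ≤ (‖w₀‖ + 1) * T := by
        have := Complex.abs_re_le_norm w
        have h3 := neg_abs_le w.re
        nlinarith [hu.1, hu.2, norm_nonneg w₀]
      have h5 : ‖(-u : ℂ)‖ ≤ T := by
        rw [norm_neg, Complex.norm_real, Real.norm_of_nonneg hu.1.le]; exact hu.2
      gcongr)
    (MeasureTheory.integrable_const _)
    (by
      refine Filter.Eventually.of_forall ?_
      intro u w hw
      have h := br_lin_deriv u w
      exact h.cexp.const_mul _)
  exact key.2.differentiableAt

lemma br_real_int (b σ : ℝ) (hb : 0 ≤ b) (hσ : 0 < σ) :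
    MeasureTheory.IntegrableOn (fun u : ℝ => u ^ b * Real.exp (-(σ * u))) (Ioi 0) := by
  have := integrableOn_rpow_mul_exp_neg_mul_rpow (p := 1) (s := b) (b := σ) (by linarith) one_pos hσ
  simpa using this

lemma br_cplx_int (b : ℝ) (w : ℂ) (hb : 0 ≤ b) (hσ : 0 < w.re) :
    MeasureTheory.IntegrableOn (fun u : ℝ => ((u ^ b : ℝ) : ℂ) * Complex.exp (-(w * u))) (Ioi 0) := by
  refine MeasureTheory.Integrable.mono' (br_real_int b w.re hb hσ) (brI_cont b hb w).aestronglyMeasurable ?_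
  refine (MeasureTheory.ae_restrict_iff' measurableSet_Ioi).mpr (Filter.Eventually.of_forall ?_)
  intro u hu
  exact (brI_norm_integrand b w u hu).le

lemma br_full_diff (a : ℝ) (ha : 0 ≤ a) (w₀ : ℂ) (hw : 0 < w₀.re) :
    DifferentiableAt ℂ
      (fun w : ℂ => ∫ u in Ioi (0:ℝ), ((u ^ a : ℝ) : ℂ) * Complex.exp (-(w * u))) w₀ := by
  have hc := brI_cont a ha
  have key := hasDerivAt_integral_of_dominated_loc_of_deriv_le (𝕜 := ℂ)
    (μ := MeasureTheory.volume.restrict (Ioi 0)) (x₀ := w₀) (s := Metric.ball w₀ (w₀.re / 2))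
    (F := fun (w : ℂ) (u : ℝ) => ((u ^ a : ℝ) : ℂ) * Complex.exp (-(w * u)))
    (F' := fun (w : ℂ) (u : ℝ) => ((u ^ a : ℝ) : ℂ) * (Complex.exp (-(w * u)) * (-u)))
    (bound := fun u => u ^ (a + 1) * Real.exp (-(w₀.re / 2 * u)))
    (Metric.ball_mem_nhds _ (by positivity))
    (Filter.Eventually.of_forall fun w => (hc w).aestronglyMeasurable)
    (br_cplx_int a w₀ ha hw)
    (by
      have h2 := Real.continuous_rpow_const ha
      have : Continuous (fun (u : ℝ) => ((u ^ a : ℝ) : ℂ) * (Complex.exp (-(w₀ * u)) * (-u))) := by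
        fun_prop
      exact this.aestronglyMeasurable)
    (by
      refine (MeasureTheory.ae_restrict_iff' measurableSet_Ioi).mpr (Filter.Eventually.of_forall ?_)
      intro u hu w hw
      have hu0 : (0:ℝ) < u := hu
      rw [← mul_assoc, norm_mul, brI_norm_integrand a w u hu, norm_neg, Complex.norm_real,
        Real.norm_of_nonneg hu0.le, Real.rpow_add hu0, Real.rpow_one, mul_right_comm]
      have h4 : w₀.re / 2 ≤ w.re := by
        rw [Metric.mem_ball, dist_eq_norm] at hw
        have := Complex.abs_re_le_norm (w - w₀)
        have h3 := neg_abs_le (w - w₀).re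
        rw [Complex.sub_re] at *
        linarith
      gcongr)
    (br_real_int (a + 1) (w₀.re / 2) (by linarith) (by positivity))
    (by
      refine Filter.Eventually.of_forall ?_
      intro u w hw
      have h := br_lin_deriv u w
      exact h.cexp.const_mul _)
  exact key.2.differentiableAt

lemma br_full (a : ℝ) (ha : 0 ≤ a) (w : ℂ) (hw : 0 < w.re) :
    ∫ u in Ioi (0:ℝ), ((u ^ a : ℝ) : ℂ) * Complex.exp (-(w * u))
      = (1 / w) ^ ((a : ℂ) + 1) * (Real.Gamma (a + 1) : ℂ) := by
  have hreal : ∀ t : ℝ, 0 < t → ∫ u in Ioi (0:ℝ), ((u ^ a : ℝ) : ℂ) * Complex.exp (-((t:ℂ) * u))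
      = (1 / (t:ℂ)) ^ ((a : ℂ) + 1) * (Real.Gamma (a + 1) : ℂ) := by
    intro t ht
    have := Complex.integral_cpow_mul_exp_neg_mul_Ioi (a := (a : ℂ) + 1) (r := t) (by simp; linarith) ht
    rw [← Complex.Gamma_ofReal]
    push_cast
    rw [← this]
    refine MeasureTheory.setIntegral_congr_fun measurableSet_Ioi ?_
    intro u hu
    simp only [add_sub_cancel_right]
    rw [Complex.ofReal_cpow (le_of_lt hu)]
  have hop : IsOpen {z : ℂ | 0 < z.re} := isOpen_lt continuous_const Complex.continuous_re
  have h1 : AnalyticOnNhd ℂ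
      (fun w : ℂ => ∫ u in Ioi (0:ℝ), ((u ^ a : ℝ) : ℂ) * Complex.exp (-(w * u))) {z | 0 < z.re} :=
    DifferentiableOn.analyticOnNhd (fun z hz => (br_full_diff a ha z hz).differentiableWithinAt) hop
  have h2 : AnalyticOnNhd ℂ
      (fun w : ℂ => (1 / w) ^ ((a : ℂ) + 1) * (Real.Gamma (a + 1) : ℂ)) {z | 0 < z.re} := by
    refine DifferentiableOn.analyticOnNhd (fun z hz => DifferentiableAt.differentiableWithinAt ?_) hop
    have hz' : 0 < z.re := hz
    have hz0 : z ≠ 0 := by rintro rfl; simp at hz'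
    have : (1 / z) ∈ Complex.slitPlane := by
      left
      rw [one_div, Complex.inv_re]
      have := Complex.normSq_pos.mpr hz0
      positivity
    refine DifferentiableAt.mul_const (DifferentiableAt.cpow_const ?_ this) _
    exact (differentiableAt_const _).div differentiableAt_id hz0
  refine h1.eqOn_of_preconnected_of_frequently_eq h2 (convex_halfSpace_re_gt 0).isPreconnected
    (z₀ := 1) (by simp) ?_ hw
  have ht : Filter.Tendsto (fun t : ℝ => (t : ℂ)) (nhdsWithin 1 {1}ᶜ) (nhdsWithin 1 {1}ᶜ) := by
    refine tendsto_nhdsWithin_of_tendsto_nhds_of_eventually_within _ ?_ ?_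
    · have : Filter.Tendsto (fun t : ℝ => (t : ℂ)) (nhds 1) (nhds ((1:ℝ):ℂ)) :=
        Complex.continuous_ofReal.tendsto 1
      simpa using this.mono_left nhdsWithin_le_nhds
    · filter_upwards [self_mem_nhdsWithin] with t ht
      simpa using ht
  refine ht.frequently (Filter.Eventually.frequently ?_)
  filter_upwards [nhdsWithin_le_nhds (lt_mem_nhds (zero_lt_one (α := ℝ)))] with t ht
  exact hreal t ht

lemma br_part (a b D : ℝ) (hb : 0 ≤ b) (hD : 0 ≤ D) (w : ℂ) (hw : 0 < w.re) (S : Set ℝ)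
    (hS : MeasurableSet S) (hS0 : S ⊆ Ioi 0) (h : ∀ u ∈ S, u ^ a ≤ D * u ^ b) :
    ‖∫ u in S, ((u ^ a : ℝ) : ℂ) * Complex.exp (-(w * u))‖
      ≤ D * ((1 / w.re) ^ (b + 1) * Real.Gamma (b + 1)) := by
  have hI := br_real_int b w.re hb hw
  have e := Real.integral_rpow_mul_exp_neg_mul_Ioi (a := b + 1) (r := w.re) (by linarith) hw
  simp only [add_sub_cancel_right] at e
  rw [← e]
  calc _ ≤ ∫ u in S, D * (u ^ b * Real.exp (-(w.re * u))) := by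
        refine MeasureTheory.norm_integral_le_of_norm_le ((hI.mono_set hS0).const_mul D) ?_
        refine (MeasureTheory.ae_restrict_iff' hS).mpr (Filter.Eventually.of_forall ?_)
        intro u hu
        rw [brI_norm_integrand a w u (hS0 hu), ← mul_assoc]
        gcongr
        exact h u hu
    _ = D * ∫ u in S, (u ^ b * Real.exp (-(w.re * u))) := MeasureTheory.integral_const_mul _ _
    _ ≤ _ := by
        refine mul_le_mul_of_nonneg_left (MeasureTheory.setIntegral_mono_set hI ?_ hS0.eventuallyLE) hD
        refine (MeasureTheory.ae_restrict_iff' measurableSet_Ioi).mpr (Filter.Eventually.of_forall ?_)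
        intro u hu
        have : (0:ℝ) < u := hu
        simp only [Pi.zero_apply]
        positivity

lemma br_est (a b T : ℝ) (ha : 0 ≤ a) (hb : 0 ≤ b) (hT : 0 < T) (w : ℂ) (hw : 0 < w.re) :
    (b ≤ a → ‖brI a T w‖ ≤ T ^ (a - b) * ((1 / w.re) ^ (b + 1) * Real.Gamma (b + 1))) ∧
    (a ≤ b → ‖brI a T w - (1 / w) ^ ((a : ℂ) + 1) * (Real.Gamma (a + 1) : ℂ)‖
      ≤ T ^ (a - b) * ((1 / w.re) ^ (b + 1) * Real.Gamma (b + 1))) := by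
  constructor
  · intro hab
    refine br_part a b _ hb (by positivity) w hw _ measurableSet_Ioc Ioc_subset_Ioi_self ?_
    intro u hu
    calc u ^ a = u ^ (a - b) * u ^ b := by rw [← Real.rpow_add hu.1]; simp
      _ ≤ _ := by
        have := Real.rpow_le_rpow hu.1.le hu.2 (sub_nonneg.2 hab)
        have := Real.rpow_nonneg hu.1.le b
        gcongr
  · intro hab
    rw [← br_full a ha w hw]
    have hI := br_cplx_int a w ha hw
    have hsp : ∫ u in Ioi (0:ℝ), ((u ^ a : ℝ) : ℂ) * Complex.exp (-(w * u)) = brI a T w +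
        ∫ u in Ioi T, ((u ^ a : ℝ) : ℂ) * Complex.exp (-(w * u)) := by
      rw [← Ioc_union_Ioi_eq_Ioi hT.le, MeasureTheory.setIntegral_union (Ioc_disjoint_Ioi le_rfl) measurableSet_Ioi
        (hI.mono_set Ioc_subset_Ioi_self) (hI.mono_set (Ioi_subset_Ioi hT.le))]
      rfl
    rw [hsp, sub_add_cancel_left, norm_neg]
    refine br_part a b _ hb (by positivity) w hw _ measurableSet_Ioi (Ioi_subset_Ioi hT.le) ?_
    intro u hu
    have hu0 : 0 < u := hT.trans hu
    calc u ^ a = u ^ (a - b) * u ^ b := by rw [← Real.rpow_add hu0]; simp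
      _ ≤ _ := by
        have := Real.rpow_le_rpow_of_nonpos hT (le_of_lt hu) (sub_nonpos.2 hab)
        gcongr

lemma br_main (d : ℕ) (s : ℝ) (hs : 0 < s) 
    (P : (Fin d → ℂ) → ℂ) 
    (θ₁ θ₂ : ℝ) (hθ : θ₁ < θ₂) (hθ2 : θ₂ ≤ θ₁ + 2 * Real.pi)
    (hopen : θ₂ - θ₁ < s * Real.pi) (r : ℝ)
    (ρ₁ : ℝ) (hP : AnalyticOnNhd ℂ P (polydisk d ρ₁))
    (g : ℕ → (Fin d → ℂ) → ℂ)
    (hgA : ∀ n, AnalyticOnNhd ℂ (g n) (polydisk d ρ₁))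
    (C A : ℝ) (hC : 0 < C) (hA : 0 < A)
    (hgB : ∀ n : ℕ, ∀ x ∈ polydisk d ρ₁,
      ‖g n x‖ ≤ C * A ^ n * Real.Gamma (s * n + 1)) :
      ∃ f : (Fin d → ℂ) → ℂ,
        AnalyticOnNhd ℂ f (PSector d P θ₁ θ₂ r ∩ polydisk d ρ₁) ∧
        ∃ K B : ℝ, 0 < K ∧ 0 < B ∧
          ∀ N : ℕ, ∀ x ∈ PSector d P θ₁ θ₂ r ∩ polydisk d ρ₁,
            ‖f x - ∑ n ∈ Finset.range N, g n x * P x ^ n‖ ≤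
              K * B ^ N * Real.Gamma (s * N + 1) * ‖P x‖ ^ N := by
  obtain ⟨m, hm⟩ : ∃ m : ℝ, m = (θ₁ + θ₂) / 2 := ⟨_, rfl⟩
  obtain ⟨T, hTdef⟩ : ∃ T : ℝ, T = (1 / (2 * A)) ^ (1 / s) := ⟨_, rfl⟩
  have hT : 0 < T := by rw [hTdef]; positivity
  have hTs : T ^ s = 1 / (2 * A) := by
    rw [hTdef, ← Real.rpow_mul (by positivity)]
    rw [one_div_mul_cancel hs.ne', Real.rpow_one]
  have hTn : ∀ n : ℕ, T ^ (s * n) = (1 / (2 * A)) ^ n := by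
    intro n; rw [Real.rpow_mul hT.le, hTs, Real.rpow_natCast]
  have hsn : ∀ n : ℕ, 0 ≤ s * n := fun n => by positivity
  have hΓ : ∀ n : ℕ, 0 < Real.Gamma (s * n + 1) := fun n =>
    Real.Gamma_pos_of_pos (by have := hsn n; linarith)
  obtain ⟨c, hcdef⟩ : ∃ c : ℝ, c = Real.cos ((θ₂ - θ₁) / (2 * s)) := ⟨_, rfl⟩
  have hang0 : 0 < (θ₂ - θ₁) / (2 * s) := div_pos (by linarith) (by positivity)
  have hang : (θ₂ - θ₁) / (2 * s) < Real.pi / 2 := by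
    rw [div_lt_div_iff₀ (by positivity) (by positivity)]; linarith
  have hc : 0 < c := by
    rw [hcdef]; exact Real.cos_pos_of_mem_Ioo ⟨by linarith [Real.pi_pos], hang⟩
  let z : (Fin d → ℂ) → ℂ := fun x => P x * Complex.exp (-(m * I))
  let W : (Fin d → ℂ) → ℂ := fun x => Complex.exp (-(Complex.log (z x) / s))
  let b : ℕ → (Fin d → ℂ) → ℂ := fun n x =>
    g n x * (Complex.exp (n * (m * I)) / (Real.Gamma (s * n + 1) : ℂ))
  let F : ℕ → (Fin d → ℂ) → ℂ := fun n x => b n x * (W x * brI (s * n) T (W x))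
  have hbB : ∀ n, ∀ x ∈ polydisk d ρ₁, ‖b n x‖ ≤ C * A ^ n := by
    intro n x hx
    have e : ‖Complex.exp (n * (m * I))‖ = 1 := by
      rw [Complex.norm_exp]; simp
    simp only [b]
    rw [norm_mul, norm_div, e, Complex.norm_real, Real.norm_of_nonneg (hΓ n).le, mul_one_div,
      div_le_iff₀ (hΓ n)]
    exact hgB n x hx
  have hFB : ∀ n, ∀ x ∈ polydisk d ρ₁,
      ‖F n x‖ ≤ (C * (‖W x‖ * (Real.exp (‖W x‖ * T) * T))) * (1 / 2) ^ n := by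
    intro n x hx
    simp only [F]
    rw [norm_mul (b n x), norm_mul (W x)]
    calc _ ≤ (C * A ^ n) * (‖W x‖ * (T ^ (s * n) * Real.exp (‖W x‖ * T) * T)) := by
          gcongr
          · exact hbB n x hx
          · exact brI_bound _ T (hsn n) hT _
      _ = (C * (‖W x‖ * (Real.exp (‖W x‖ * T) * T))) * (A * (1 / (2 * A))) ^ n := by
          rw [hTn, mul_pow]; ring
      _ = _ := by congr 2; field_simp
  have hgeo : Summable (fun n : ℕ => (1 / 2 : ℝ) ^ n) :=
    summable_geometric_of_lt_one (by norm_num) (by norm_num)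
  have hFs : ∀ x ∈ polydisk d ρ₁, Summable (fun n => F n x) := fun x hx =>
    Summable.of_norm_bounded (hgeo.mul_left _) (fun n => hFB n x hx)
  -- sector facts
  have hlog : ∀ x ∈ PSector d P θ₁ θ₂ r, z x ≠ 0 ∧ ∃ φ : ℝ, |φ| < (θ₂ - θ₁) / 2 ∧
      Complex.log (z x) = (Real.log ‖P x‖ : ℂ) + φ * I := by
    rintro x ⟨-, hP0, θ, hθm, hPx⟩
    have hn : 0 < ‖P x‖ := norm_pos_iff.mpr hP0
    refine ⟨mul_ne_zero hP0 (Complex.exp_ne_zero _), θ - m, ?_, ?_⟩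
    · rw [abs_lt, hm]; constructor <;> linarith [hθm.1, hθm.2]
    · have : z x = Complex.exp ((Real.log ‖P x‖ : ℂ) + ((θ - m : ℝ) : ℂ) * I) := by
        simp only [z]
        rw [hPx]
        rw [Complex.exp_add, ← Complex.ofReal_exp, Real.exp_log (by simpa using hn), mul_assoc,
          ← Complex.exp_add]
        rw [← hPx]
        congr 2
        push_cast; ring
      rw [this, Complex.log_exp]
      · simp [hm]; linarith [hθm.1, hθm.2]
      · simp [hm]; linarith [hθm.1, hθm.2]
  have hslit : ∀ x ∈ PSector d P θ₁ θ₂ r, z x ∈ Complex.slitPlane := by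
    intro x hx
    obtain ⟨h0, φ, hφ, hl⟩ := hlog x hx
    rw [Complex.mem_slitPlane_iff_arg]
    refine ⟨?_, h0⟩
    rw [← Complex.log_im, hl]
    simp
    intro h
    have := le_abs_self φ
    linarith
  have hzA : AnalyticOnNhd ℂ z (polydisk d ρ₁) := fun x hx => (hP x hx).mul analyticAt_const
  have hWA : ∀ x ∈ polydisk d ρ₁, z x ∈ Complex.slitPlane → AnalyticAt ℂ W x := by
    intro x hx hz
    have h1 : AnalyticAt ℂ (fun x => Complex.log (z x)) x := (hzA x hx).clog hz
    exact (h1.div_const).neg.cexp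
  have hbA : ∀ n, ∀ x ∈ polydisk d ρ₁, AnalyticAt ℂ (b n) x := fun n x hx =>
    (hgA n x hx).mul analyticAt_const
  have hFA : ∀ n, ∀ x ∈ polydisk d ρ₁, z x ∈ Complex.slitPlane → AnalyticAt ℂ (F n) x := by
    intro n x hx hz
    have hW := hWA x hx hz
    have hI : AnalyticAt ℂ (brI (s * n) T) (W x) := (brI_diff _ T (hsn n) hT).analyticAt _
    exact (hbA n x hx).mul (hW.mul (hI.comp hW))
  have hpo : IsOpen (polydisk d ρ₁) := by
    have : polydisk d ρ₁ = ⋂ j, {x : Fin d → ℂ | ‖x j‖ < ρ₁} := by ext; simp [polydisk]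
    rw [this]
    exact isOpen_iInter_of_finite fun j => isOpen_lt (by fun_prop) continuous_const
  refine ⟨fun x => ∑' n, F n x, ?_, 2 * C / c, 2 * A * (1 / c) ^ s, by positivity, by positivity, ?_⟩
  · rintro x₀ ⟨hx₀, hx₀'⟩
    have hz0 := hslit x₀ hx₀
    have e1 : ∀ᶠ x in nhds x₀, x ∈ polydisk d ρ₁ := hpo.mem_nhds hx₀'
    have e2 : ∀ᶠ x in nhds x₀, z x ∈ Complex.slitPlane :=
      (hzA x₀ hx₀').continuousAt (Complex.isOpen_slitPlane.mem_nhds hz0)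
    have e3 : ∀ᶠ x in nhds x₀, ‖W x‖ < ‖W x₀‖ + 1 :=
      (hWA x₀ hx₀' hz0).continuousAt.norm (gt_mem_nhds (by linarith))
    obtain ⟨ε, hε, hball⟩ := Metric.eventually_nhds_iff_ball.mp (e1.and (e2.and e3))
    refine br_tsum_analytic F x₀ ε hε _ (hgeo.mul_left
      (C * ((‖W x₀‖ + 1) * (Real.exp ((‖W x₀‖ + 1) * T) * T))))
      (fun n x hx => hFA n x (hball x hx).1 (hball x hx).2.1) ?_
    intro n x hx
    refine (hFB n x (hball x hx).1).trans ?_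
    have := (hball x hx).2.2.le
    gcongr
  · rintro N x ⟨hx, hx'⟩
    obtain ⟨h0, φ, hφ, hl⟩ := hlog x hx
    have hPn : 0 < ‖P x‖ := norm_pos_iff.mpr hx.2.1
    obtain ⟨L, hL⟩ : ∃ L : ℝ, L = Real.exp (-(Real.log ‖P x‖ / s)) := ⟨_, rfl⟩
    have hL0 : 0 < L := by rw [hL]; positivity
    have hφs : |φ / s| < (θ₂ - θ₁) / (2 * s) := by
      rw [abs_div, abs_of_pos hs, div_lt_div_iff₀ hs (by positivity)]
      nlinarith
    have hWnorm : ‖W x‖ = L := by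
      simp only [W]
      rw [Complex.norm_exp, hl, hL]
      congr 1
      rw [Complex.neg_re, Complex.div_ofReal_re]
      simp
    have hWre : c * L ≤ (W x).re := by
      simp only [W]
      rw [Complex.exp_re, hl]
      have e1 : (-(((Real.log ‖P x‖ : ℂ) + φ * I) / s)).re = -(Real.log ‖P x‖ / s) := by
        rw [Complex.neg_re, Complex.div_ofReal_re]; simp
      have e2 : (-(((Real.log ‖P x‖ : ℂ) + φ * I) / s)).im = -(φ / s) := by
        rw [Complex.neg_im, Complex.div_ofReal_im]; simp
      rw [e1, e2, ← hL, Real.cos_neg, ← Real.cos_abs, mul_comm, hcdef]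
      gcongr
      exact Real.cos_le_cos_of_nonneg_of_le_pi (abs_nonneg _) (by linarith [Real.pi_pos]) hφs.le
    have hWre0 : 0 < (W x).re := lt_of_lt_of_le (by positivity) hWre
    have hPL : (1 / L) ^ s = ‖P x‖ := by
      rw [hL, one_div, ← Real.exp_neg, neg_neg, ← Real.exp_mul, div_mul_cancel₀ _ hs.ne',
        Real.exp_log hPn]
    have hfull : ∀ n : ℕ, b n x * (W x * ((1 / W x) ^ (((s * n : ℝ) : ℂ) + 1) *
        (Real.Gamma (s * n + 1) : ℂ))) = g n x * P x ^ n := by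
      intro n
      have hsC : (s : ℂ) ≠ 0 := by exact_mod_cast hs.ne'
      have e0 : 1 / W x = Complex.exp (Complex.log (z x) / s) := by
        simp only [W]; rw [one_div, ← Complex.exp_neg, neg_neg]
      have him : (Complex.log (z x) / s).im = φ / s := by
        rw [hl, Complex.div_ofReal_im]; simp
      have hab := abs_lt.mp hφs
      have e1 : Complex.log (1 / W x) = Complex.log (z x) / s := by
        rw [e0, Complex.log_exp]
        · rw [him]; linarith [Real.pi_pos]
        · rw [him]; linarith [Real.pi_pos]
      have e2 : W x * (1 / W x) ^ (((s * n : ℝ) : ℂ) + 1) = z x ^ n := by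
        rw [Complex.cpow_def_of_ne_zero (by rw [e0]; exact Complex.exp_ne_zero _), e1]
        simp only [W]
        rw [← Complex.exp_add]
        have : -(Complex.log (z x) / s) + Complex.log (z x) / s * (((s * n : ℝ) : ℂ) + 1)
            = n * Complex.log (z x) := by
          push_cast; field_simp; ring
        rw [this, Complex.exp_nat_mul, Complex.exp_log h0]
      have hG : (Real.Gamma (s * n + 1) : ℂ) ≠ 0 := by exact_mod_cast (hΓ n).ne'
      rw [← mul_assoc (W x), e2]
      have e3 : Complex.exp (n * (m * I)) * z x ^ n = P x ^ n := by
        simp only [z]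
        rw [Complex.exp_nat_mul, ← mul_pow, mul_left_comm, ← Complex.exp_add, add_neg_cancel,
          Complex.exp_zero, mul_one]
      rw [← e3]
      simp only [b]
      field_simp
    let D : ℕ → ℂ := fun n => F n x - if n ∈ Finset.range N then g n x * P x ^ n else 0
    have hD : HasSum D (∑' n, F n x - ∑ n ∈ Finset.range N, g n x * P x ^ n) := by
      refine (hFs x hx').hasSum.sub ?_
      have := hasSum_sum_of_ne_finset_zero (s := Finset.range N)
        (f := fun n => if n ∈ Finset.range N then g n x * P x ^ n else 0)
        (fun n hn => if_neg hn) (L := SummationFilter.unconditional ℕ)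
      rwa [Finset.sum_congr rfl (fun n hn => if_pos hn)] at this
    have hG : (1 / (W x).re) ^ (s * N + 1) ≤ ((1 / c) ^ s) ^ N * ‖P x‖ ^ N * (1 / (c * L)) := by
      calc (1 / (W x).re) ^ (s * N + 1) ≤ (1 / (c * L)) ^ (s * N + 1) := by
            gcongr
        _ = ((1 / (c * L)) ^ s) ^ N * (1 / (c * L)) := by
            rw [Real.rpow_add (by positivity), Real.rpow_one, Real.rpow_mul (by positivity),
              Real.rpow_natCast]
        _ = _ := by
            rw [← mul_pow, ← hPL, ← Real.mul_rpow (by positivity) (by positivity)]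
            congr 3
            rw [one_div_mul_one_div]
    have hTT : ∀ n : ℕ, T ^ (s * n - s * N) = (1 / (2 * A)) ^ n * (2 * A) ^ N := by
      intro n
      rw [Real.rpow_sub hT, hTn, hTn, one_div, inv_pow, inv_pow, div_inv_eq_mul]
    have hDB : ∀ n, ‖D n‖ ≤ (C / c * (2 * A * (1 / c) ^ s) ^ N * Real.Gamma (s * N + 1) * ‖P x‖ ^ N)
        * (1 / 2) ^ n := by
      intro n
      obtain ⟨est1, est2⟩ := br_est (s * n) (s * N) T (hsn n) (hsn N) hT (W x) hWre0
      have key : ∀ y : ℂ, ‖y‖ ≤ T ^ (s * n - s * N) *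
          ((1 / (W x).re) ^ (s * N + 1) * Real.Gamma (s * N + 1)) →
          ‖b n x * (W x * y)‖ ≤ (C / c * (2 * A * (1 / c) ^ s) ^ N * Real.Gamma (s * N + 1) * ‖P x‖ ^ N)
        * (1 / 2) ^ n := by
        intro y hy
        rw [norm_mul (b n x), norm_mul (W x), hWnorm]
        have hΓN := (hΓ N).le
        calc _ ≤ (C * A ^ n) * (L * (((1 / (2 * A)) ^ n * (2 * A) ^ N) *
              ((((1 / c) ^ s) ^ N * ‖P x‖ ^ N * (1 / (c * L))) * Real.Gamma (s * N + 1)))) := by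
              gcongr
              · exact hbB n x hx'
              · refine hy.trans ?_
                rw [hTT]
                gcongr
          _ = (C / c * (2 * A * (1 / c) ^ s) ^ N * Real.Gamma (s * N + 1) * ‖P x‖ ^ N)
              * (A * (1 / (2 * A))) ^ n := by
              rw [mul_pow (2 * A) ((1 / c) ^ s), mul_pow A (1 / (2 * A))]
              generalize (1 / c) ^ s = v
              field_simp
          _ = _ := by congr 2; field_simp
      by_cases hn : n < N
      · have e : D n = b n x * (W x * (brI (s * n) T (W x) - (1 / W x) ^ (((s * n : ℝ) : ℂ) + 1) *
            (Real.Gamma (s * n + 1) : ℂ))) := by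
          simp only [D, F, Finset.mem_range, if_pos hn]
          rw [← hfull n]; ring
        rw [e]
        exact key _ (est2 (by gcongr))
      · have e : D n = b n x * (W x * brI (s * n) T (W x)) := by
          simp only [D, F, Finset.mem_range, if_neg hn, sub_zero]
        rw [e]
        push Not at hn
        exact key _ (est1 (by gcongr))
    have := tsum_of_norm_bounded (hasSum_geometric_two.mul_left _) hDB
    rw [hD.tsum_eq] at this
    refine this.trans (le_of_eq ?_)
    ring

/-- **Borel–Ritt–Gevrey theorem for asymptotics with respect to a germ** (Proposition 7.14).
Given Gevrey-bounded coefficients `g_n` on `D(0;ρ₁)` and a `P`-sector of opening `< sπ`,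
there is a holomorphic `f` near `0` on the sector with
`|f − Σ_{n<N} g_n·P^n| ≤ K·B^N·Γ(sN+1)·|P|^N` for all `N`. -/
theorem borel_ritt_gevrey_for_germ_asymptotics
    (d : ℕ) (hd : 1 ≤ d) (s : ℝ) (hs : 0 < s) (R : ℝ) (hR : 0 < R)
    (P : (Fin d → ℂ) → ℂ) (hP : AnalyticOnNhd ℂ P (polydisk d R))
    (hP0 : P 0 = 0) (hPne : ∃ x ∈ polydisk d R, P x ≠ 0)
    (θ₁ θ₂ : ℝ) (hθ : θ₁ < θ₂) (hθ2 : θ₂ ≤ θ₁ + 2 * Real.pi)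
    (hopen : θ₂ - θ₁ < s * Real.pi)
    (r : ℝ) (hr : 0 < r) (hrR : r ≤ R)
    (ρ₁ : ℝ) (hρ₁ : 0 < ρ₁) (hρ₁R : ρ₁ ≤ R)
    (g : ℕ → (Fin d → ℂ) → ℂ)
    (hgA : ∀ n, AnalyticOnNhd ℂ (g n) (polydisk d ρ₁))
    (C A : ℝ) (hC : 0 < C) (hA : 0 < A)
    (hgB : ∀ n : ℕ, ∀ x ∈ polydisk d ρ₁,
      ‖g n x‖ ≤ C * A ^ n * Real.Gamma (s * n + 1)) :
    ∃ ρ > 0, ρ ≤ ρ₁ ∧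
      ∃ f : (Fin d → ℂ) → ℂ,
        AnalyticOnNhd ℂ f (PSector d P θ₁ θ₂ r ∩ polydisk d ρ) ∧
        ∃ K B : ℝ, 0 < K ∧ 0 < B ∧
          ∀ N : ℕ, ∀ x ∈ PSector d P θ₁ θ₂ r ∩ polydisk d ρ,
            ‖f x - ∑ n ∈ Finset.range N, g n x * P x ^ n‖ ≤
              K * B ^ N * Real.Gamma (s * N + 1) * ‖P x‖ ^ N :=
  ⟨ρ₁, hρ₁, le_rfl, br_main d s hs P θ₁ θ₂ hθ hθ2 hopen r ρ₁
    (hP.mono (fun _ hx j => (hx j).trans_le hρ₁R)) g hgA C A hC hA hgB⟩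
end
end
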